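/- Let F be a free group (on an arbitrary set of generators) and let A be any ℤ[F]-module. Then the group cohomology Hⁿ(F;A) vanishes for every n ≥ 2. -/

import Mathlib

/-!
Embed `A` in the module `C` coinduced from the trivial subgroup, which is acyclic by Shapiro's
lemma; by the long exact sequence, `Hⁿ⁺¹(G; A)` is then a quotient of `Hⁿ(G; C/A)`. For a free
group `H¹` is right exact: a `1`-cocycle with values in `B` is a section of `B ⋊ G → G`, and
sections lift along surjections because free groups are projective. Hence `H¹(G; C/A)` is a quotient
of `H¹(G; C) = 0`, so `H²(G; A) = 0` for all `A`, and dimension shifting gives the higher degrees.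
-/

open CategoryTheory Limits groupCohomology

universe u

theorem exists_comp_eq_of_surjective_of_isFreeGroup {G H K : Type*} [Group G] [IsFreeGroup G]
    [Group H] [Group K] {p : H →* K} (hp : Function.Surjective p) (f : G →* K) :
    ∃ s : G →* H, p.comp s = f :=
  ⟨IsFreeGroup.lift fun x ↦ Function.surjInv hp (f (IsFreeGroup.of x)),
    IsFreeGroup.ext_hom fun x ↦ by simp [Function.surjInv_eq]⟩

variable {k G : Type u} [CommRing k] [Group G]

section Cocycles

/-- The action of `G` on a representation `A` by automorphisms of the additive group of `A`, written
multiplicatively so that `SemidirectProduct` applies to it. -/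
noncomputable def actionMulAut (A : Rep.{u} k G) : G →* MulAut (Multiplicative A) :=
  letI : DistribMulAction G A := DistribMulAction.compHom A A.ρ
  (MulAutMultiplicative A).symm.toMonoidHom.comp (DistribMulAction.toAddAut G A)

/-- The extension `A ⋊ G` of `G` by a representation `A`; its sections over `G` are the `1`-cocycles
with values in `A`. -/
abbrev RepSemidirectProduct (A : Rep.{u} k G) : Type u :=
  Multiplicative A ⋊[actionMulAut A] G

variable {A B : Rep.{u} k G}

@[simp]
theorem toAdd_actionMulAut_apply (g : G) (a : Multiplicative A) :
    (actionMulAut A g a).toAdd = A.ρ g a.toAdd :=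
  rfl

/-- The homomorphism `A ⋊ G → B ⋊ G` induced by a morphism of representations `A ⟶ B`. -/
noncomputable def RepSemidirectProduct.map (φ : A ⟶ B) :
    RepSemidirectProduct A →* RepSemidirectProduct B :=
  SemidirectProduct.map φ.hom.toLinearMap.toAddMonoidHom.toMultiplicative (MonoidHom.id G)
    fun g ↦ MonoidHom.ext fun a ↦ congrArg Multiplicative.ofAdd (Rep.hom_comm_apply φ g a.toAdd)

theorem RepSemidirectProduct.map_surjective {φ : A ⟶ B} (hφ : Function.Surjective φ.hom) :
    Function.Surjective (RepSemidirectProduct.map φ) := by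
  rintro ⟨b, g⟩
  obtain ⟨a, ha⟩ := hφ b.toAdd
  exact ⟨⟨Multiplicative.ofAdd a, g⟩, SemidirectProduct.ext ha rfl⟩

/-- The section `g ↦ (c g, g)` of `A ⋊ G → G` attached to a `1`-cocycle `c`. -/
noncomputable def sectionOfCocycle (c : cocycles₁ A) : G →* RepSemidirectProduct A :=
  MonoidHom.mk' (fun g ↦ ⟨Multiplicative.ofAdd (c g), g⟩) fun g h ↦
    SemidirectProduct.ext (((mem_cocycles₁_iff c.1).1 c.2 g h).trans (add_comm _ _)) rfl

/-- The `1`-cocycle given by the first component of a section of `A ⋊ G → G`. -/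
noncomputable def cocycleOfSection (s : G →* RepSemidirectProduct A) (hs : ∀ g, (s g).right = g) :
    cocycles₁ A :=
  ⟨fun g ↦ (s g).left.toAdd, (mem_cocycles₁_iff _).2 fun g h ↦ by simp [hs, add_comm]⟩

theorem mapCocycles₁_surjective_of_isFreeGroup [IsFreeGroup G] {φ : A ⟶ B}
    (hφ : Function.Surjective φ.hom) :
    Function.Surjective (mapCocycles₁ (MonoidHom.id G) φ) := by
  intro c
  obtain ⟨s, hs⟩ := exists_comp_eq_of_surjective_of_isFreeGroup
    (RepSemidirectProduct.map_surjective hφ) (sectionOfCocycle c)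
  have map_s (g : G) : RepSemidirectProduct.map φ (s g) = sectionOfCocycle c g :=
    DFunLike.congr_fun hs g
  refine ⟨cocycleOfSection s fun g ↦ congrArg SemidirectProduct.right (map_s g), ?_⟩
  exact cocycles₁_ext fun g ↦ congrArg (·.left.toAdd) (map_s g)

instance preservesEpimorphisms_functor_one_of_isFreeGroup [IsFreeGroup G] :
    (functor k G 1).PreservesEpimorphisms where
  preserves {A B} φ hφ := by
    have epi_mapCocycles : Epi (mapCocycles₁ (MonoidHom.id G) φ) :=
      (ModuleCat.epi_iff_surjective _).2
        (mapCocycles₁_surjective_of_isFreeGroup ((Rep.epi_iff_surjective φ).1 hφ))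
    have epi_comp : Epi (H1π A ≫ map (MonoidHom.id G) φ 1) := by
      rw [H1π_comp_map]
      infer_instance
    exact epi_of_epi (H1π A) (map (MonoidHom.id G) φ 1)

end Cocycles

section DimensionShifting

/-- The representation coinduced from the restriction of `A` to the trivial subgroup, i.e. the
functions `G → A` with `G` acting by translation. -/
noncomputable abbrev coindBot (A : Rep.{u} k G) : Rep.{u} k G :=
  Rep.coind (⊥ : Subgroup G).subtype (Rep.res (⊥ : Subgroup G).subtype A)

theorem isZero_groupCohomology_coindBot (A : Rep.{u} k G) {n : ℕ} (hn : n ≠ 0) :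
    IsZero (groupCohomology (coindBot A) n) := by
  obtain ⟨m, rfl⟩ := Nat.exists_eq_succ_of_ne_zero hn
  exact (isZero_groupCohomology_succ_of_subsingleton _ m).of_iso (coindIso _ (m + 1))

/-- The embedding of `A` into `coindBot A` sending `a` to its orbit map `g ↦ g • a`. -/
noncomputable abbrev toCoindBot (A : Rep.{u} k G) : A ⟶ coindBot A :=
  Rep.resCoindToHom _ A _ (𝟙 _)

instance mono_toCoindBot (A : Rep.{u} k G) : Mono (toCoindBot A) := by
  refine (Rep.mono_iff_injective _).2 fun a b hab ↦ ?_
  have orbit_maps_eq_at_one : A.ρ 1 a = A.ρ 1 b := congrFun (congrArg Subtype.val hab) 1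
  simpa using orbit_maps_eq_at_one

/-- The short exact sequence `0 ⟶ A ⟶ coindBot A ⟶ coindBot A / A ⟶ 0` used to shift degrees. -/
noncomputable abbrev coindBotShortComplex (A : Rep.{u} k G) : ShortComplex (Rep.{u} k G) :=
  ShortComplex.mk (toCoindBot A) (cokernel.π (toCoindBot A)) (cokernel.condition _)

theorem coindBotShortComplex_shortExact (A : Rep.{u} k G) :
    (coindBotShortComplex A).ShortExact where
  exact := ShortComplex.exact_cokernel _
  mono_f := mono_toCoindBot A
  epi_g := inferInstanceAs (Epi (cokernel.π _))

theorem isZero_groupCohomology_succ_of_isZero_cokernel {A : Rep.{u} k G} {n : ℕ}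
    (h : IsZero (groupCohomology (cokernel (toCoindBot A)) n)) :
    IsZero (groupCohomology A (n + 1)) :=
  have := epi_δ_of_isZero (coindBotShortComplex_shortExact A) n
    (isZero_groupCohomology_coindBot A n.succ_ne_zero)
  IsZero.of_epi (δ (coindBotShortComplex_shortExact A) n (n + 1) rfl) h

theorem isZero_groupCohomology_of_preservesEpimorphisms {m n : ℕ}
    [(functor k G m).PreservesEpimorphisms] (hm : m ≠ 0) (hmn : m < n) (A : Rep.{u} k G) :
    IsZero (groupCohomology A n) := by
  induction n, hmn using Nat.le_induction generalizing A with
  | base =>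
    have isZero_cokernel : IsZero ((functor k G m).obj (cokernel (toCoindBot A))) :=
      IsZero.of_epi ((functor k G m).map (cokernel.π (toCoindBot A)))
        (isZero_groupCohomology_coindBot A hm)
    exact isZero_groupCohomology_succ_of_isZero_cokernel isZero_cokernel
  | succ n _ ih => exact isZero_groupCohomology_succ_of_isZero_cokernel (ih _)

end DimensionShifting

theorem stmt_8_general [IsFreeGroup G] (A : Rep.{u} k G) {n : ℕ} (hn : 2 ≤ n) :
    Subsingleton (groupCohomology A n) :=
  ModuleCat.subsingleton_of_isZero
    (isZero_groupCohomology_of_preservesEpimorphisms one_ne_zero hn A)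

/-- Let `F` be a free group (on an arbitrary set of generators) and let `A`
be any `ℤ[F]`-module (i.e. a representation of `F` over `ℤ`). Then the group cohomology
`Hⁿ(F;A)` vanishes for every `n ≥ 2`. -/
theorem stmt_8 (α : Type) (A : Rep ℤ (FreeGroup α)) (n : ℕ) (hn : 2 ≤ n) :
    Subsingleton (groupCohomology A n) :=
  stmt_8_general A hn
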